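/- Let A be a commutative unital complex Banach algebra with a maximal ideal M algebraically generated by t_1,…,t_k, with dim_ℂ(cl(M^n)/cl(M^{n+1})) = C(n+k−1,n) for every n ≥ 1, and let φ be a character of A with ker φ = M. Then there exist δ > 0 and a continuous injective map Γ from the open polydisc D = {λ ∈ ℂ^k : |λ_i| < δ for all i} into the character space M(A) such that Γ(0) = φ and, for every x ∈ A, the function λ ↦ Γ(λ)(x) is analytic on D; i.e., there is an analytic variety at φ. -/

import Mathlib

/-- The closure of the `n`-th power of an ideal, viewed as a `ℂ`-submodule. -/
def idealPowClosure {A : Type*} [CommRing A] [Algebra ℂ A] [TopologicalSpace A]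
    [ContinuousAdd A] [ContinuousConstSMul ℂ A] (M : Ideal A) (n : ℕ) : Submodule ℂ A :=
  ((M ^ n).restrictScalars ℂ).topologicalClosure

/-!
Homogeneous polynomials of degree `n` in the generators span `cl(Mⁿ)` modulo `cl(Mⁿ⁺¹)`, and the
prescribed dimension is exactly that of the space of such polynomials. Hence no nonzero form of
degree `n` in `t₁, …, t_k` lies in `Mⁿ⁺¹`, so every `x ∈ A` has a unique Taylor expansion
`x ∼ ∑ Pₙ(t)` with `Pₙ` homogeneous of degree `n`, and `x ↦ ∑ Pₙ` is multiplicative. By the open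
mapping theorem one can divide, `x = φ(x) + ∑ tᵢ xᵢ`, with `‖xᵢ‖ ≤ C ‖x‖`; iterating the division
computes the `Pₙ` and bounds them geometrically, uniformly in `x`. The expansions therefore converge
on a common polydisc, and evaluating them at its points gives the characters `Γ(λ)`.
-/

open MvPolynomial
open scoped NNReal

section HomogeneousPolynomials

variable {σ R A : Type*}

theorem finrank_homogeneousSubmodule [CommRing R] [Nontrivial R] [Fintype σ] (n : ℕ) :
    Module.finrank R (homogeneousSubmodule σ R n) = (n + Fintype.card σ - 1).choose n := by
  classical
  let exponents : Sym σ n ≃ {d : σ →₀ ℕ | d.degree = n} := Sym.equivNatSum σ n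
  have : Fintype {d : σ →₀ ℕ | d.degree = n} := Fintype.ofEquiv _ exponents
  rw [homogeneousSubmodule_eq_finsupp_supported,
    (AddMonoidAlgebra.supportedEquivFinsupp {d : σ →₀ ℕ | d.degree = n}).finrank_eq,
    Module.finrank_finsupp_self, ← Fintype.card_congr exponents, Sym.card_sym_eq_choose,
    Nat.add_comm]

theorem homogeneousComponent_sum_mul_sum [CommSemiring R] {p q : ℕ → MvPolynomial σ R}
    (hp : ∀ i, (p i).IsHomogeneous i) (hq : ∀ i, (q i).IsHomogeneous i) (n : ℕ) :
    homogeneousComponent n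
        ((∑ i ∈ Finset.range (n + 1), p i) * ∑ j ∈ Finset.range (n + 1), q j) =
      ∑ ij ∈ Finset.HasAntidiagonal.antidiagonal n, p ij.1 * q ij.2 := by
  have component_mul (ij : ℕ × ℕ) : homogeneousComponent n (p ij.1 * q ij.2) =
      if n = ij.1 + ij.2 then p ij.1 * q ij.2 else 0 :=
    homogeneousComponent_of_mem ((hp _).mul (hq _))
  rw [Finset.sum_mul_sum, ← Finset.sum_product', map_sum]
  simp only [component_mul]
  rw [← Finset.sum_filter]
  refine Finset.sum_congr ?_ fun _ _ => rfl
  ext ⟨i, j⟩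
  simp only [Finset.mem_filter, Finset.mem_product, Finset.mem_range,
    Finset.HasAntidiagonal.mem_antidiagonal]
  omega

theorem homogeneousComponent_eq_zero_of_mem_pow_idealOfVars [CommSemiring R]
    {p : MvPolynomial σ R} {m n : ℕ} (hp : p ∈ idealOfVars σ R ^ n) (hm : m < n) :
    homogeneousComponent m p = 0 :=
  homogeneousComponent_eq_zero' _ _ fun d hd =>
    (hm.trans_le ((mem_pow_idealOfVars_iff n p).1 hp d hd)).ne'

theorem sub_homogeneousComponent_mem_pow_idealOfVars [CommRing R]
    {p : MvPolynomial σ R} {n : ℕ} (hp : p ∈ idealOfVars σ R ^ n) :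
    p - homogeneousComponent n p ∈ idealOfVars σ R ^ (n + 1) := by
  rw [mem_pow_idealOfVars_iff'] at hp ⊢
  intro d hd
  rw [coeff_sub, coeff_homogeneousComponent]
  split_ifs with hdn
  · exact sub_self _
  · rw [hp d (by omega), sub_zero]

theorem aeval_mem_span_pow_of_mem_pow_idealOfVars [CommSemiring R] [CommSemiring A] [Algebra R A]
    (t : σ → A) {p : MvPolynomial σ R} {n : ℕ} (hp : p ∈ idealOfVars σ R ^ n) :
    aeval t p ∈ Ideal.span (Set.range t) ^ n := by
  have h := Ideal.mem_map_of_mem (aeval t : MvPolynomial σ R →ₐ[R] A) hp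
  rwa [Ideal.map_pow, Ideal.map_span, ← Set.range_comp,
    show aeval t ∘ (X : σ → MvPolynomial σ R) = t from funext (aeval_X t)] at h

theorem aeval_mem_span_pow_of_isHomogeneous [CommSemiring R] [CommSemiring A] [Algebra R A]
    (t : σ → A) {p : MvPolynomial σ R} {n : ℕ} (hp : p.IsHomogeneous n) :
    aeval t p ∈ Ideal.span (Set.range t) ^ n :=
  aeval_mem_span_pow_of_mem_pow_idealOfVars t <|
    (mem_pow_idealOfVars_iff n p).2 fun _ hd => (hp.degree_eq_sum_deg_support hd).le

theorem eval_mem_span_pow_succ [CommSemiring A] (t : σ → A) {p : MvPolynomial σ A} {n : ℕ}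
    (hp : p.IsHomogeneous n) (hcoeff : ∀ d, p.coeff d ∈ Ideal.span (Set.range t)) :
    eval t p ∈ Ideal.span (Set.range t) ^ (n + 1) := by
  rw [p.as_sum, map_sum]
  refine Ideal.sum_mem _ fun d hd => ?_
  have monomial_mem : eval t (monomial d (1 : A)) ∈ Ideal.span (Set.range t) ^ n :=
    aeval_mem_span_pow_of_isHomogeneous t
      (isHomogeneous_monomial 1 (hp.degree_eq_sum_deg_support hd).symm)
  rw [← mul_one (p.coeff d), ← C_mul_monomial, map_mul, eval_C, pow_succ']
  exact Ideal.mul_mem_mul (hcoeff d) monomial_mem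

theorem exists_isHomogeneous_sub_aeval_mem_span_pow_succ [CommRing R] [CommRing A] [Algebra R A]
    {t : σ → A} (φ : A →ₐ[R] R) (hφ : RingHom.ker φ ≤ Ideal.span (Set.range t)) {n : ℕ} {x : A}
    (hx : x ∈ Ideal.span (Set.range t) ^ n) :
    ∃ q : MvPolynomial σ R, q.IsHomogeneous n ∧
      x - aeval t q ∈ Ideal.span (Set.range t) ^ (n + 1) := by
  obtain ⟨p, hp, rfl⟩ := (Ideal.mem_span_pow_iff_exists_isHomogeneous t x).1 hx
  refine ⟨map φ p, hp.map _, ?_⟩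
  have eval_sub : eval t p - aeval t (map (φ : A →+* R) p) =
      eval t (p - map (algebraMap R A) (map φ p)) := by
    rw [map_sub, eval_map, aeval_def]
  rw [eval_sub]
  refine eval_mem_span_pow_succ t (hp.sub ((hp.map _).map _)) fun d => hφ ?_
  simp [RingHom.mem_ker, coeff_map]

end HomogeneousPolynomials

section QuasiRegularFamily

variable {ι R A : Type*} [CommRing R] [CommRing A] [Algebra R A] {t : ι → A}

variable (R) in
/-- The family `t` is quasi-regular over `R`: with `I` the ideal generated by `t`, a nonzero form of
degree `n` with coefficients in `R` never takes at `t` a value in `Iⁿ⁺¹`. When `A = R ⊕ I` this says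
that the associated graded ring of `I` is the polynomial ring in the classes of the `tᵢ`. -/
def IsQuasiRegularFamily (t : ι → A) : Prop :=
  ∀ ⦃n : ℕ⦄ ⦃q : MvPolynomial ι R⦄, q.IsHomogeneous n →
    aeval t q ∈ Ideal.span (Set.range t) ^ (n + 1) → q = 0

theorem IsQuasiRegularFamily.mem_pow_idealOfVars_of_aeval_mem (ht : IsQuasiRegularFamily R t)
    {n : ℕ} {p : MvPolynomial ι R} (hp : aeval t p ∈ Ideal.span (Set.range t) ^ n) :
    p ∈ idealOfVars ι R ^ n := by
  induction n with
  | zero => simp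
  | succ n ih =>
    have tail_mem := sub_homogeneousComponent_mem_pow_idealOfVars
      (ih (Ideal.pow_le_pow_right n.le_succ hp))
    have component_eq_zero : homogeneousComponent n p = 0 := by
      refine ht (homogeneousComponent_isHomogeneous n p) ?_
      have h := Ideal.sub_mem _ hp (aeval_mem_span_pow_of_mem_pow_idealOfVars t tail_mem)
      rwa [← map_sub, sub_sub_cancel] at h
    rwa [component_eq_zero, sub_zero] at tail_mem

end QuasiRegularFamily

section DimensionCount

theorem eq_zero_of_apply_mem_of_le_sup_range {K V E : Type*} [Field K] [AddCommGroup V]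
    [Module K V] [Module.Finite K V] [AddCommGroup E] [Module K E] {N N' : Submodule K E}
    (f : V →ₗ[K] E) (hf : ∀ v, f v ∈ N) (hN : N ≤ N' ⊔ LinearMap.range f)
    (hrank : Module.finrank K V = Module.finrank K (N ⧸ N'.comap N.subtype)) {v : V}
    (hv : f v ∈ N') : v = 0 := by
  let g : V →ₗ[K] N ⧸ N'.comap N.subtype := (N'.comap N.subtype).mkQ ∘ₗ f.codRestrict N hf
  have g_surjective : Function.Surjective g := by
    intro y
    obtain ⟨⟨x, hx⟩, rfl⟩ := Submodule.mkQ_surjective _ y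
    obtain ⟨a, ha, -, ⟨w, rfl⟩, rfl⟩ := Submodule.mem_sup.1 (hN hx)
    exact ⟨w, (Submodule.Quotient.eq _).2 (by simpa using ha)⟩
  have := Module.Finite.of_surjective g g_surjective
  have g_injective :=
    (LinearMap.injective_iff_surjective_of_finrank_eq_finrank hrank).2 g_surjective
  have g_apply_eq_zero : g v = 0 := (Submodule.Quotient.mk_eq_zero (N'.comap N.subtype)).2 hv
  exact g_injective (g_apply_eq_zero.trans (map_zero g).symm)

variable {𝕜 ι A : Type*} [NontriviallyNormedField 𝕜] [CompleteSpace 𝕜]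
  [CommRing A] [Algebra 𝕜 A] [TopologicalSpace A] [IsTopologicalAddGroup A] [ContinuousSMul 𝕜 A]
  {t : ι → A}

theorem topologicalClosure_span_pow_le_sup_map_homogeneousSubmodule [Finite ι] (φ : A →ₐ[𝕜] 𝕜)
    (hφ : RingHom.ker φ ≤ Ideal.span (Set.range t)) (n : ℕ) :
    ((Ideal.span (Set.range t) ^ n).restrictScalars 𝕜).topologicalClosure ≤
      ((Ideal.span (Set.range t) ^ (n + 1)).restrictScalars 𝕜).topologicalClosure ⊔
        (homogeneousSubmodule ι 𝕜 n).map (aeval t).toLinearMap := by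
  have := Module.Finite.iff_fg.2 (homogeneousSubmodule_fg ι 𝕜 n)
  refine Submodule.topologicalClosure_minimal _ (fun x hx => ?_)
    (Submodule.isClosed_sup_finiteDimensional _ _ (Submodule.isClosed_topologicalClosure _))
  obtain ⟨q, hq, hxq⟩ := exists_isHomogeneous_sub_aeval_mem_span_pow_succ φ hφ hx
  exact Submodule.mem_sup.2
    ⟨_, Submodule.le_topologicalClosure _ hxq, _, ⟨q, hq, rfl⟩, sub_add_cancel _ _⟩

theorem isQuasiRegularFamily_of_rank_eq_choose [Fintype ι] (φ : A →ₐ[𝕜] 𝕜)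
    (hφ : RingHom.ker φ = Ideal.span (Set.range t))
    (hdim : ∀ n : ℕ, 1 ≤ n →
      Module.rank 𝕜
        (((Ideal.span (Set.range t) ^ n).restrictScalars 𝕜).topologicalClosure ⧸
          ((Ideal.span (Set.range t) ^ (n + 1)).restrictScalars 𝕜).topologicalClosure.comap
            ((Ideal.span (Set.range t) ^ n).restrictScalars 𝕜).topologicalClosure.subtype)
        = ((n + Fintype.card ι - 1).choose n : Cardinal)) :
    IsQuasiRegularFamily 𝕜 t := by
  intro n q hq hqt
  rcases Nat.eq_zero_or_pos n with rfl | hn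
  · obtain ⟨c, rfl⟩ : ∃ c, q = C c :=
      ⟨_, totalDegree_eq_zero_iff_eq_C.1 (Nat.le_zero.1 hq.totalDegree_le)⟩
    rw [zero_add, pow_one, ← hφ, RingHom.mem_ker, aeval_C, AlgHom.commutes] at hqt
    simpa using hqt
  · let evalForm : homogeneousSubmodule ι 𝕜 n →ₗ[𝕜] A :=
      (aeval t).toLinearMap ∘ₗ (homogeneousSubmodule ι 𝕜 n).subtype
    have := Module.Finite.iff_fg.2 (homogeneousSubmodule_fg ι 𝕜 n)
    have range_evalForm : LinearMap.range evalForm =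
        (homogeneousSubmodule ι 𝕜 n).map (aeval t).toLinearMap := by
      rw [LinearMap.range_comp, Submodule.range_subtype]
    have hzero : (⟨q, hq⟩ : homogeneousSubmodule ι 𝕜 n) = 0 :=
      eq_zero_of_apply_mem_of_le_sup_range evalForm
        (fun p => Submodule.le_topologicalClosure _ (aeval_mem_span_pow_of_isHomogeneous t p.2))
        (range_evalForm ▸ topologicalClosure_span_pow_le_sup_map_homogeneousSubmodule φ hφ.le n)
        (by rw [finrank_homogeneousSubmodule, Module.finrank, hdim n hn, Cardinal.toNat_natCast])
        (Submodule.le_topologicalClosure _ hqt)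
    exact congrArg Subtype.val hzero

end DimensionCount

section TaylorPolynomials

variable {ι R A : Type*} [Fintype ι] [CommRing R]

/-- The degree-`n` Taylor form of `x` in the generators, obtained by iterating the division
`x = f x + ∑ tᵢ (S x i)`. -/
noncomputable def taylorForm (f : A → R) (S : A → ι → A) : ℕ → A → MvPolynomial ι R
  | 0, x => C (f x)
  | n + 1, x => ∑ i, X i * taylorForm f S n (S x i)

theorem isHomogeneous_taylorForm (f : A → R) (S : A → ι → A) (n : ℕ) (x : A) :
    (taylorForm f S n x).IsHomogeneous n := by
  induction n generalizing x with
  | zero => exact isHomogeneous_C _ _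
  | succ n ih =>
    refine IsHomogeneous.sum _ _ _ fun i _ => ?_
    rw [Nat.add_comm]
    exact (isHomogeneous_X _ i).mul (ih _)

variable [CommRing A] [Algebra R A] {f : A → R} {S : A → ι → A} {t : ι → A}

/-- `S` divides by the family `t` with remainder `f`, as in Hadamard's lemma
`x = x(0) + ∑ tᵢ xᵢ`. The quotients `S x i` need not depend linearly on `x`. -/
def IsHadamardDivision (f : A → R) (t : ι → A) (S : A → ι → A) : Prop :=
  ∀ x, x = algebraMap R A (f x) + ∑ i, t i * S x i

namespace IsHadamardDivision

theorem sub_aeval_sum_taylorForm_mem (hS : IsHadamardDivision f t S) (n : ℕ) (x : A) :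
    x - aeval t (∑ j ∈ Finset.range n, taylorForm f S j x) ∈ Ideal.span (Set.range t) ^ n := by
  induction n generalizing x with
  | zero => simp
  | succ n ih =>
    have remainder_eq : x - aeval t (∑ j ∈ Finset.range (n + 1), taylorForm f S j x) =
        ∑ i, t i * (S x i - aeval t (∑ j ∈ Finset.range n, taylorForm f S j (S x i))) := by
      have hx : ∑ i, t i * S x i = x - algebraMap R A (f x) := eq_sub_of_add_eq' (hS x).symm
      rw [Finset.sum_range_succ']
      simp only [taylorForm, map_add, map_sum, map_mul, aeval_X, aeval_C, mul_sub,
        Finset.mul_sum, Finset.sum_sub_distrib]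
      rw [Finset.sum_comm, hx]
      abel
    rw [remainder_eq, pow_succ']
    exact Ideal.sum_mem _ fun i _ => Ideal.mul_mem_mul (Ideal.subset_span ⟨i, rfl⟩) (ih _)

theorem taylorForm_eq_homogeneousComponent (hS : IsHadamardDivision f t S)
    (ht : IsQuasiRegularFamily R t) {n : ℕ} {x : A} {p : MvPolynomial ι R}
    (hp : x - aeval t p ∈ Ideal.span (Set.range t) ^ (n + 1)) :
    taylorForm f S n x = homogeneousComponent n p := by
  have diff_mem := Ideal.sub_mem _ hp (hS.sub_aeval_sum_taylorForm_mem (n + 1) x)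
  rw [sub_sub_sub_cancel_left, ← map_sub] at diff_mem
  have component_eq := homogeneousComponent_eq_zero_of_mem_pow_idealOfVars
    (ht.mem_pow_idealOfVars_of_aeval_mem diff_mem) n.lt_succ_self
  rw [map_sub, map_sum, sub_eq_zero] at component_eq
  rw [← component_eq, Finset.sum_eq_single n]
  · exact (homogeneousComponent_eq_self (isHomogeneous_taylorForm f S n x)).symm
  · intro j _ hj
    rw [homogeneousComponent_of_mem (isHomogeneous_taylorForm f S j x), if_neg hj.symm]
  · simp

theorem taylorForm_aeval (hS : IsHadamardDivision f t S) (ht : IsQuasiRegularFamily R t) (n : ℕ)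
    (p : MvPolynomial ι R) : taylorForm f S n (aeval t p) = homogeneousComponent n p :=
  hS.taylorForm_eq_homogeneousComponent ht (by simp)

theorem taylorForm_add (hS : IsHadamardDivision f t S) (ht : IsQuasiRegularFamily R t) (n : ℕ)
    (x y : A) : taylorForm f S n (x + y) = taylorForm f S n x + taylorForm f S n y := by
  have hx := hS.sub_aeval_sum_taylorForm_mem (n + 1) x
  have hy := hS.sub_aeval_sum_taylorForm_mem (n + 1) y
  rw [hS.taylorForm_eq_homogeneousComponent ht hx, hS.taylorForm_eq_homogeneousComponent ht hy,
    ← map_add]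
  apply hS.taylorForm_eq_homogeneousComponent ht
  rw [map_add, add_sub_add_comm]
  exact Ideal.add_mem _ hx hy

theorem taylorForm_mul (hS : IsHadamardDivision f t S) (ht : IsQuasiRegularFamily R t) (n : ℕ)
    (x y : A) :
    taylorForm f S n (x * y) =
      ∑ ij ∈ Finset.HasAntidiagonal.antidiagonal n,
        taylorForm f S ij.1 x * taylorForm f S ij.2 y := by
  have hx := hS.sub_aeval_sum_taylorForm_mem (n + 1) x
  have hy := hS.sub_aeval_sum_taylorForm_mem (n + 1) y
  rw [← homogeneousComponent_sum_mul_sum (fun i => isHomogeneous_taylorForm f S i x)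
    (fun j => isHomogeneous_taylorForm f S j y)]
  apply hS.taylorForm_eq_homogeneousComponent ht
  rw [map_mul]
  exact Ideal.mul_sub_mul_mem _ hx hy

end IsHadamardDivision

end TaylorPolynomials

section TaylorSeries

variable {𝕜 ι A : Type*} [NontriviallyNormedField 𝕜] [Fintype ι]

/-- The Taylor expansion of `x` as a power series on `ι → 𝕜`; its terms are multilinear maps that
restrict to the forms `taylorForm f S n x` on the diagonal. -/
noncomputable def taylorSeries (f : A → 𝕜) (S : A → ι → A) :
    A → FormalMultilinearSeries 𝕜 (ι → 𝕜) 𝕜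
  | x, 0 => ContinuousMultilinearMap.uncurry0 𝕜 _ (f x)
  | x, n + 1 => ContinuousLinearMap.uncurryLeft
      (∑ i, (ContinuousLinearMap.proj (R := 𝕜) (φ := fun _ : ι => 𝕜) i).smulRight
        (taylorSeries f S (S x i) n))

theorem taylorSeries_apply_diag (f : A → 𝕜) (S : A → ι → A) (x : A) (n : ℕ) (l : ι → 𝕜) :
    taylorSeries f S x n (fun _ => l) = eval l (taylorForm f S n x) := by
  induction n generalizing x with
  | zero => simp [taylorSeries, taylorForm]
  | succ n ih =>
    simp only [taylorSeries, taylorForm, ContinuousLinearMap.uncurryLeft_apply, map_sum, map_mul,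
      eval_X, ← ih, sum_apply, ContinuousLinearMap.smulRight_apply, ContinuousLinearMap.proj_apply,
      smul_apply, smul_eq_mul]
    rfl

theorem norm_taylorSeries_le [Norm A] {f : A → 𝕜} {S : A → ι → A} {K C : ℝ≥0}
    (hf : ∀ x, ‖f x‖ ≤ K * ‖x‖) (hS : ∀ x i, ‖S x i‖ ≤ C * ‖x‖) (x : A) (n : ℕ) :
    ‖taylorSeries f S x n‖ ≤ K * (Fintype.card ι * C) ^ n * ‖x‖ := by
  induction n generalizing x with
  | zero => simpa [taylorSeries] using hf x
  | succ n ih =>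
    have norm_proj_le (i : ι) : ‖ContinuousLinearMap.proj (R := 𝕜) (φ := fun _ : ι => 𝕜) i‖ ≤ 1 :=
      ContinuousLinearMap.opNorm_le_bound _ zero_le_one fun v => by
        simpa using norm_le_pi_norm v i
    let term (i : ι) : (ι → 𝕜) →L[𝕜] (ι → 𝕜) [×n]→L[𝕜] 𝕜 :=
      (ContinuousLinearMap.proj (R := 𝕜) (φ := fun _ : ι => 𝕜) i).smulRight
        (taylorSeries f S (S x i) n)
    have norm_term_le (i : ι) : ‖term i‖ ≤ K * (Fintype.card ι * C) ^ n * (C * ‖x‖) := by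
      rw [ContinuousLinearMap.norm_smulRight_apply]
      calc _ ≤ 1 * ‖taylorSeries f S (S x i) n‖ := by gcongr; exact norm_proj_le i
        _ ≤ K * (Fintype.card ι * C) ^ n * ‖S x i‖ := by rw [one_mul]; exact ih _
        _ ≤ K * (Fintype.card ι * C) ^ n * (C * ‖x‖) := by gcongr; exact hS x i
    rw [taylorSeries, ContinuousLinearMap.uncurryLeft_norm]
    calc ‖∑ i, term i‖
        ≤ ∑ i, ‖term i‖ := norm_sum_le Finset.univ term
      _ ≤ ∑ _i : ι, K * (Fintype.card ι * C) ^ n * (C * ‖x‖) :=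
          Finset.sum_le_sum fun i _ => norm_term_le i
      _ = K * (Fintype.card ι * C) ^ (n + 1) * ‖x‖ := by
          rw [Finset.sum_const, Finset.card_univ, nsmul_eq_mul]
          ring

theorem exists_pos_forall_le_radius_taylorSeries [Norm A] {f : A → 𝕜} {S : A → ι → A} {K C : ℝ≥0}
    (hf : ∀ x, ‖f x‖ ≤ K * ‖x‖) (hS : ∀ x i, ‖S x i‖ ≤ C * ‖x‖) :
    ∃ δ : ℝ≥0, 0 < δ ∧ ∀ x, δ ≤ (taylorSeries f S x).radius := by
  let δ : ℝ≥0 := (Fintype.card ι * C + 1)⁻¹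
  have ratio_le_one : (Fintype.card ι * C : ℝ) * δ ≤ 1 := by
    have h : Fintype.card ι * C * δ ≤ 1 :=
      mul_inv_le_one_of_le₀ (le_add_of_nonneg_right zero_le_one) (by positivity)
    exact_mod_cast h
  refine ⟨δ, by positivity, fun x => ?_⟩
  refine FormalMultilinearSeries.le_radius_of_bound _ (K * ‖x‖) fun n => ?_
  calc ‖taylorSeries f S x n‖ * (δ : ℝ) ^ n
      ≤ K * (Fintype.card ι * C) ^ n * ‖x‖ * (δ : ℝ) ^ n := by
        gcongr
        exact norm_taylorSeries_le hf hS x n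
    _ = K * ‖x‖ * (Fintype.card ι * C * δ) ^ n := by ring
    _ ≤ K * ‖x‖ := mul_le_of_le_one_right ((norm_nonneg _).trans (hf x))
        (pow_le_one₀ (by positivity) ratio_le_one)

theorem sum_taylorSeries_zero (f : A → 𝕜) (S : A → ι → A) (x : A) :
    (taylorSeries f S x).sum 0 = f x := by
  rw [FormalMultilinearSeries.sum, tsum_eq_single 0]
  · simp [taylorSeries]
  · intro n hn
    exact (taylorSeries f S x n).map_coord_zero ⟨0, Nat.pos_of_ne_zero hn⟩ rfl

namespace IsHadamardDivision

variable [CommRing A] [Algebra 𝕜 A] {f : A → 𝕜} {S : A → ι → A} {t : ι → A}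

theorem sum_taylorSeries_aeval (hS : IsHadamardDivision f t S) (ht : IsQuasiRegularFamily 𝕜 t)
    (l : ι → 𝕜) (p : MvPolynomial ι 𝕜) : (taylorSeries f S (aeval t p)).sum l = eval l p := by
  simp only [FormalMultilinearSeries.sum, taylorSeries_apply_diag, hS.taylorForm_aeval ht]
  rw [tsum_eq_sum (s := Finset.range (p.totalDegree + 1)), ← map_sum, sum_homogeneousComponent]
  intro n hn
  rw [homogeneousComponent_eq_zero _ _ (by simpa using hn), map_zero]

variable [CompleteSpace 𝕜]

/-- Evaluation of Taylor expansions at a point `l` where all of them converge. -/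
noncomputable def taylorEval (hS : IsHadamardDivision f t S) (ht : IsQuasiRegularFamily 𝕜 t)
    {l : ι → 𝕜} (hl : ∀ x, l ∈ Metric.eball 0 (taylorSeries f S x).radius) : A →ₐ[𝕜] 𝕜 :=
  have summable_eval_taylorForm (x : A) : Summable fun n => ‖eval l (taylorForm f S n x)‖ := by
    simpa only [taylorSeries_apply_diag] using (taylorSeries f S x).summable_norm_apply (hl x)
  have commutes (c : 𝕜) : (taylorSeries f S (algebraMap 𝕜 A c)).sum l = c := by
    simpa using hS.sum_taylorSeries_aeval ht l (C c)
  { toFun x := (taylorSeries f S x).sum l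
    map_one' := by simpa using commutes 1
    map_zero' := by simpa using commutes 0
    map_add' x y := by
      simp only [FormalMultilinearSeries.sum, taylorSeries_apply_diag, hS.taylorForm_add ht,
        map_add]
      exact (summable_eval_taylorForm x).of_norm.tsum_add (summable_eval_taylorForm y).of_norm
    map_mul' x y := by
      simp only [FormalMultilinearSeries.sum, taylorSeries_apply_diag, hS.taylorForm_mul ht,
        map_sum, map_mul]
      exact (tsum_mul_tsum_eq_tsum_sum_antidiagonal_of_summable_norm
        (summable_eval_taylorForm x) (summable_eval_taylorForm y)).symm
    commutes' := commutes }

end IsHadamardDivision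

end TaylorSeries

section Characters

variable {𝕜 ι A : Type*} [NontriviallyNormedField 𝕜]

theorem continuousOn_characterSpace_of_forall_eval {X : Type*} [TopologicalSpace X]
    [NonUnitalNonAssocSemiring A] [TopologicalSpace A] [Module 𝕜 A]
    {Γ : X → WeakDual.characterSpace 𝕜 A} {s : Set X}
    (hΓ : ∀ x, ContinuousOn (fun l => Γ l x) s) : ContinuousOn Γ s := by
  rw [continuousOn_iff_continuous_domRestrict]
  refine Continuous.subtype_mk (WeakDual.continuous_of_continuous_eval fun x => ?_) _
  exact continuousOn_iff_continuous_domRestrict.1 (hΓ x)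

variable [CompleteSpace 𝕜] [Fintype ι] [NormedCommRing A] [NormedAlgebra 𝕜 A] [CompleteSpace A]

-- The open mapping theorem is applied to `(c, v) ↦ c + ∑ tᵢ vᵢ`.
theorem exists_isHadamardDivision_norm_le (t : ι → A) (φ : A →ₐ[𝕜] 𝕜)
    (hφ : RingHom.ker φ = Ideal.span (Set.range t)) :
    ∃ (S : A → ι → A) (C : ℝ≥0), IsHadamardDivision φ t S ∧ ∀ x i, ‖S x i‖ ≤ C * ‖x‖ := by
  let L : 𝕜 × (ι → A) →L[𝕜] A := (ContinuousLinearMap.toSpanSingleton 𝕜 1).coprod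
    (∑ i, (ContinuousLinearMap.mul 𝕜 A (t i)).comp (.proj (R := 𝕜) (φ := fun _ : ι => A) i))
  have L_apply (c : 𝕜) (v : ι → A) : L (c, v) = algebraMap 𝕜 A c + ∑ i, t i * v i := by
    simp [L, Algebra.algebraMap_eq_smul_one]
  have φ_L (c : 𝕜) (v : ι → A) : φ (L (c, v)) = c := by
    have t_mem_ker (i : ι) : φ (t i) = 0 := by
      rw [← RingHom.mem_ker, hφ]
      exact Ideal.subset_span ⟨i, rfl⟩
    simp [L_apply, t_mem_ker]
  have L_surjective : L.range = ⊤ := by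
    refine LinearMap.range_eq_top.2 fun x => ?_
    have hx : x - algebraMap 𝕜 A (φ x) ∈ Ideal.span (Set.range t) := by
      rw [← hφ, RingHom.mem_ker]
      simp
    obtain ⟨v, hv⟩ := (Submodule.mem_span_range_iff_exists_fun A).1 hx
    refine ⟨(φ x, v), (L_apply _ _).trans ?_⟩
    simp only [smul_eq_mul, mul_comm (v _)] at hv
    rw [hv, add_sub_cancel]
  obtain ⟨inv, -⟩ := L.exists_nonlinearRightInverse_of_surjective L_surjective
  refine ⟨fun x => (inv x).2, inv.nnnorm, fun x => ?_, fun x i => ?_⟩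
  · have remainder_eq : φ x = (inv x).1 := by
      conv_lhs => rw [← inv.right_inv x]
      exact φ_L _ _
    rw [remainder_eq, ← L_apply]
    exact (inv.right_inv x).symm
  · exact (norm_le_pi_norm _ i).trans ((norm_snd_le _).trans (inv.bound x))

theorem banach_lemma31_part_ii_general (t : ι → A) (ht : IsQuasiRegularFamily 𝕜 t)
    (φ : WeakDual.characterSpace 𝕜 A) (hφ : ∀ x : A, φ x = 0 ↔ x ∈ Ideal.span (Set.range t)) :
    ∃ δ : ℝ, 0 < δ ∧
      ∃ Γ : (ι → 𝕜) → WeakDual.characterSpace 𝕜 A,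
        ContinuousOn Γ {l : ι → 𝕜 | ∀ i, ‖l i‖ < δ} ∧
        Set.InjOn Γ {l : ι → 𝕜 | ∀ i, ‖l i‖ < δ} ∧
        Γ 0 = φ ∧
        ∀ x : A, ∀ l ∈ {l : ι → 𝕜 | ∀ i, ‖l i‖ < δ},
          AnalyticAt 𝕜 (fun μ => (Γ μ) x) l := by
  obtain ⟨S, C, hS, hSC⟩ := exists_isHadamardDivision_norm_le t
    (WeakDual.CharacterSpace.toAlgHom φ) (Ideal.ext hφ)
  replace hS : IsHadamardDivision φ t S := hS
  obtain ⟨δ, hδ, hradius⟩ := exists_pos_forall_le_radius_taylorSeries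
    (K := ‖WeakDual.CharacterSpace.toCLM φ‖₊) (WeakDual.CharacterSpace.toCLM φ).le_opNorm hSC
  have polydisc_eq : {l : ι → 𝕜 | ∀ i, ‖l i‖ < δ} = Metric.eball 0 δ := by
    ext l
    simp [Metric.eball_coe, pi_norm_lt_iff (NNReal.coe_pos.2 hδ)]
  have exists_character (l : ι → 𝕜) (hl : l ∈ Metric.eball 0 (δ : ENNReal)) :
      ∃ ψ : WeakDual.characterSpace 𝕜 A, ∀ x, ψ x = (taylorSeries φ S x).sum l :=
    ⟨WeakDual.CharacterSpace.equivAlgHom.symm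
      (hS.taylorEval ht fun x => Metric.eball_subset_eball (hradius x) hl), fun _ => rfl⟩
  have : Nonempty (WeakDual.characterSpace 𝕜 A) := ⟨φ⟩
  choose! Γ hΓ using exists_character
  have analyticOnNhd_Γ (x : A) : AnalyticOnNhd 𝕜 (fun l => Γ l x) (Metric.eball 0 δ) :=
    have hsum := (taylorSeries φ S x).hasFPowerSeriesOnBall
      ((ENNReal.coe_pos.2 hδ).trans_le (hradius x))
    (hsum.analyticOnNhd.mono (Metric.eball_subset_eball (hradius x))).congr Metric.isOpen_eball
      fun l hl => (hΓ l hl x).symm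
  have Γ_apply_t (l : ι → 𝕜) (hl : l ∈ Metric.eball 0 (δ : ENNReal)) (i : ι) :
      Γ l (t i) = l i := by
    rw [hΓ l hl]
    simpa using hS.sum_taylorSeries_aeval ht l (X i)
  refine ⟨δ, hδ, Γ, ?_⟩
  rw [polydisc_eq]
  refine ⟨continuousOn_characterSpace_of_forall_eval fun x => (analyticOnNhd_Γ x).continuousOn,
    fun l hl m hm hlm => ?_, ?_, analyticOnNhd_Γ⟩
  · ext i
    rw [← Γ_apply_t l hl, ← Γ_apply_t m hm, hlm]
  · ext x
    rw [hΓ 0 (by simpa using hδ), sum_taylorSeries_zero]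

end Characters

/-- Lemma 3.1(ii): if a commutative unital complex Banach algebra `A` has a maximal ideal `M`
algebraically generated by `t₁, …, t_k` with `dim (cl(Mⁿ)/cl(Mⁿ⁺¹)) = C(n+k-1, n)` for all
`n ≥ 1`, and `φ` is a character with `ker φ = M`, then there is an analytic variety at `φ`:
a continuous injection `Γ` of an open polydisc of some radius `δ > 0` into the character
space with `Γ 0 = φ` such that `λ ↦ Γ(λ)(x)` is analytic for every `x ∈ A`. -/
theorem banach_lemma31_part_ii
    {A : Type*} [NormedCommRing A] [NormedAlgebra ℂ A] [CompleteSpace A]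
    (k : ℕ) (t : Fin k → A) (M : Ideal A) (hmax : M.IsMaximal)
    (hgen : M = Ideal.span (Set.range t))
    (hdim : ∀ n : ℕ, 1 ≤ n →
      Module.rank ℂ
        (↥(idealPowClosure M n) ⧸
          Submodule.comap (idealPowClosure M n).subtype (idealPowClosure M (n + 1)))
        = ((n + k - 1).choose n : Cardinal))
    (φ : WeakDual.characterSpace ℂ A) (hφ : ∀ x : A, φ x = 0 ↔ x ∈ M) :
    ∃ δ : ℝ, 0 < δ ∧
      ∃ Γ : (Fin k → ℂ) → WeakDual.characterSpace ℂ A,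
        ContinuousOn Γ {l : Fin k → ℂ | ∀ i, ‖l i‖ < δ} ∧
        Set.InjOn Γ {l : Fin k → ℂ | ∀ i, ‖l i‖ < δ} ∧
        Γ 0 = φ ∧
        ∀ x : A, ∀ l ∈ {l : Fin k → ℂ | ∀ i, ‖l i‖ < δ},
          AnalyticAt ℂ (fun μ => (Γ μ) x) l := by
  subst hgen
  exact banach_lemma31_part_ii_general t (isQuasiRegularFamily_of_rank_eq_choose
    (WeakDual.CharacterSpace.toAlgHom φ) (Ideal.ext hφ) (by simpa using! hdim)) φ hφ
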